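/- For all dimensions d ≥ 2 and every integer 1 ≤ k ≤ d-1 there exists a constant C such that the following holds for every n ≥ 16. Let X_1, …, X_n be independent random points, each uniformly distributed in [0,1]^d, and let P = {X_1,…,X_n}. There exists a (measurably chosen) family 𝒮 of nonempty subsets of P with |𝒮| ≤ C·n almost surely, such that for every fixed (d+k)-sided query range r, the expected value of the minimum number of sets of 𝒮 whose union equals r ∩ P is at most C·(log₂ n)^{d-1}·(log₂ log₂ n)^k. -/

import Mathlib

open MeasureTheory

/-- A `(d+k)`-sided query range: `[a_1,b_1] × ⋯ × [a_k,b_k] × (-∞,b_{k+1}] × ⋯ × (-∞,b_d]`. -/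
def DPlusKSided (d k : ℕ) (r : Set (Fin d → ℝ)) : Prop :=
  ∃ a b : Fin d → ℝ,
    r = Set.univ.pi fun i : Fin d => if (i : ℕ) < k then Set.Icc (a i) (b i) else Set.Iic (b i)

/-- The uniform probability measure on the unit cube `[0,1]^d`. -/
noncomputable def uniformCube (d : ℕ) : Measure (Fin d → ℝ) :=
  volume.restrict (Set.univ.pi fun _ : Fin d => Set.Icc (0:ℝ) 1)

/-- The minimum number of members of `𝒮` whose union equals `r ∩ P`
(as an extended nonnegative real; `⊤` if no such cover exists). -/
noncomputable def coverNum {d : ℕ} (𝒮 : Finset (Finset (Fin d → ℝ)))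
    (P : Finset (Fin d → ℝ)) (r : Set (Fin d → ℝ)) : ENNReal :=
  sInf {c : ENNReal | ∃ m : ℕ, c = m ∧ ∃ s : Fin m → Finset (Fin d → ℝ),
    (∀ i, s i ∈ 𝒮) ∧ (⋃ i, ((s i : Set (Fin d → ℝ)))) = r ∩ ↑P}

namespace RP

instance uc_prob (d : ℕ) : IsProbabilityMeasure (uniformCube d) := by
  constructor
  rw [uniformCube, Measure.restrict_apply MeasurableSet.univ, Set.univ_inter, volume_pi_pi]
  simp

/-- product set in `ℝ^(e+1)` with last-coordinate part `J`. -/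
def cyl {e : ℕ} (S : Fin e → Set ℝ) (J : Set ℝ) : Set (Fin (e+1) → ℝ) :=
  {x | (∀ j : Fin e, x j.castSucc ∈ S j) ∧ x (Fin.last e) ∈ J}

lemma cyl_eq {e : ℕ} (S : Fin e → Set ℝ) (J : Set ℝ) :
    cyl S J = Set.univ.pi (Fin.lastCases (motive := fun _ => Set ℝ) J S) := by
  ext x
  simp only [cyl, Set.mem_ofPred_eq, Set.mem_pi, Set.mem_univ, true_imp_iff]
  rw [Fin.forall_fin_succ']
  simp

lemma cyl_meas {e : ℕ} {S : Fin e → Set ℝ} {J : Set ℝ} (hS : ∀ j, MeasurableSet (S j))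
    (hJ : MeasurableSet J) : MeasurableSet (cyl S J) := by
  rw [cyl_eq]
  refine MeasurableSet.univ_pi ?_
  rw [Fin.forall_fin_succ']
  simp [hS, hJ]

lemma uc_cyl {e : ℕ} {S : Fin e → Set ℝ} {J : Set ℝ} (hS : ∀ j, MeasurableSet (S j))
    (hJ : MeasurableSet J) (hS1 : ∀ j, S j ⊆ Set.Icc 0 1) (hJ1 : J ⊆ Set.Icc 0 1) :
    uniformCube (e+1) (cyl S J) = (∏ j, volume (S j)) * volume J := by
  rw [uniformCube, Measure.restrict_apply (cyl_meas hS hJ), Set.inter_eq_left.2, cyl_eq,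
    volume_pi_pi, Fin.prod_univ_castSucc]
  · simp
  · rintro x ⟨h1, h2⟩
    simp only [Set.mem_pi, Set.mem_univ, true_imp_iff]
    rw [Fin.forall_fin_succ']
    exact ⟨fun j => hS1 j (h1 j), hJ1 h2⟩

lemma lint_cyl {e : ℕ} {S : Fin e → Set ℝ} {J : Set ℝ} (hS : ∀ j, MeasurableSet (S j))
    (hJ : MeasurableSet J) (g : ℝ → ENNReal) (hg : Measurable g) :
    ∫⁻ x, (cyl S J).indicator (fun x => g (x (Fin.last e))) x ∂(uniformCube (e+1)) ≤
      (∏ j, volume (S j)) * ∫⁻ u in J, g u := by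
  have h1 : ∫⁻ x, (cyl S J).indicator (fun x => g (x (Fin.last e))) x ∂(uniformCube (e+1)) ≤
      ∫⁻ x, (cyl S J).indicator (fun x => g (x (Fin.last e))) x := by
    exact lintegral_mono' Measure.restrict_le_self le_rfl
  refine h1.trans ?_
  have mp := volume_preserving_piFinSuccAbove (fun _ : Fin (e+1) => ℝ) (Fin.last e)
  have h2 : (fun x => (cyl S J).indicator (fun x => g (x (Fin.last e))) x) =
      fun x => (fun p : ℝ × (Fin e → ℝ) => J.indicator g p.1 *
        (Set.univ.pi S).indicator 1 p.2) (MeasurableEquiv.piFinSuccAbove (fun _ : Fin (e+1) => ℝ) (Fin.last e) x) := by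
    ext x
    simp only [MeasurableEquiv.piFinSuccAbove_apply, Fin.insertNthEquiv_last, Fin.snocEquiv_symm_apply]
    by_cases hj : x (Fin.last e) ∈ J
    · by_cases hs : ∀ j : Fin e, x j.castSucc ∈ S j
      · rw [Set.indicator_of_mem (by exact ⟨hs, hj⟩), Set.indicator_of_mem hj,
          Set.indicator_of_mem (by intro j _; simpa [Fin.init] using hs j)]
        simp
      · rw [Set.indicator_of_notMem (by rintro ⟨h, -⟩; exact hs h), Set.indicator_of_notMem (s := Set.univ.pi S)]
        · simp
        · intro h; exact hs fun j => by simpa [Fin.init] using h j trivial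
    · rw [Set.indicator_of_notMem (by rintro ⟨-, h⟩; exact hj h), Set.indicator_of_notMem hj]
      simp
  have hSm : MeasurableSet (Set.univ.pi S) := MeasurableSet.univ_pi hS
  have h3 := mp.lintegral_comp_emb (MeasurableEquiv.measurableEmbedding _)
    (fun p : ℝ × (Fin e → ℝ) => J.indicator g p.1 * (Set.univ.pi S).indicator 1 p.2)
  rw [h2]
  refine le_of_eq (h3.trans ?_)
  rw [Measure.volume_eq_prod, lintegral_prod_mul (hg.indicator hJ).aemeasurable
    (measurable_one.indicator hSm).aemeasurable, lintegral_indicator hJ, lintegral_indicator_one hSm,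
    volume_pi_pi, mul_comm]

lemma one_dim {β b : ℝ} (hβ : 0 < β) (hβ1 : β ≤ 1) (hb : 0 ≤ b) (hb1 : b ≤ 1) (N : ℕ) :
    ∫⁻ u in Set.Icc 0 b, ENNReal.ofReal (1 - β * (b - u)) ^ N ≤
      ENNReal.ofReal (1 / (β * (N + 1))) := by
  have hnn : ∀ u ∈ Set.Icc 0 b, 0 ≤ 1 - β * (b - u) := by
    rintro u ⟨h0, h1⟩
    nlinarith [mul_nonneg hβ.le h0]
  have e1 : ∫⁻ u in Set.Icc 0 b, ENNReal.ofReal (1 - β * (b - u)) ^ N =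
      ∫⁻ u in Set.Icc 0 b, ENNReal.ofReal ((1 - β * (b - u)) ^ N) := by
    refine setLIntegral_congr_fun measurableSet_Icc ?_
    intro u hu
    exact (ENNReal.ofReal_pow (hnn u hu) N).symm
  have hc : Continuous fun u : ℝ => (1 - β * (b - u)) ^ N := by fun_prop
  rw [e1, ← ofReal_integral_eq_lintegral_ofReal (hc.integrableOn_Icc)]
  · apply ENNReal.ofReal_le_ofReal
    rw [integral_Icc_eq_integral_Ioc, ← intervalIntegral.integral_of_le hb,
      intervalIntegral.integral_eq_sub_of_hasDerivAt
        (f := fun u => (1 - β * (b - u)) ^ (N+1) / (β * (N + 1)))]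
    · have : 0 ≤ (1 - β * (b - 0)) ^ (N+1) / (β * (N + 1)) := by
        apply div_nonneg
        · exact pow_nonneg (hnn 0 ⟨le_rfl, hb⟩) _
        · positivity
      simp only [sub_self, mul_zero, sub_zero, one_pow] at this ⊢
      linarith
    · intro x _
      have h := ((((hasDerivAt_id x).const_sub b).const_mul β).const_sub 1).pow (N+1)
      have h := h.div_const (β * (N+1))
      have h3 : (1 - β * (b - x)) ^ N = ((N + 1 : ℕ) : ℝ) * (1 - β * (b - id x)) ^ (N + 1 - 1) *
          -(β * -1) / (β * (N + 1)) := by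
        have : (N:ℝ) + 1 ≠ 0 := by positivity
        rw [Nat.add_sub_cancel, id]
        push_cast
        field_simp
      rw [h3]
      exact h
    · exact hc.intervalIntegrable _ _
  · refine (ae_restrict_iff' measurableSet_Icc).2 (Filter.Eventually.of_forall ?_)
    intro u hu
    exact pow_nonneg (hnn u hu) N

theorem prob_bad {e n : ℕ} (S Tg : Fin e → Set ℝ) (hS : ∀ j, MeasurableSet (S j))
    (hT : ∀ j, MeasurableSet (Tg j)) (hS1 : ∀ j, S j ⊆ Set.Icc 0 1)
    (s : Fin e → ℝ) (hs0 : ∀ j, 0 < s j)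
    (hs : ∀ j, volume (S j) = ENNReal.ofReal (s j))
    (ht : ∀ j, volume (Tg j) = ENNReal.ofReal (2 * s j))
    (b : ℝ) (hb : 0 ≤ b) (hb1 : b ≤ 1) (G : Finset (Fin n)) (hG : G.Nonempty) (q : Fin n) :
    (Measure.pi fun _ : Fin n => uniformCube (e+1))
      {ω | ω q ∈ cyl Tg (Set.Icc 0 b) ∧ ∀ i ∈ G, i ≠ q →
        ¬ (ω i ∈ cyl S (Set.Icc 0 b) ∧ ω q (Fin.last e) ≤ ω i (Fin.last e))} ≤
      ENNReal.ofReal (2 ^ e / G.card) := by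
  classical
  obtain ⟨m, rfl⟩ : ∃ m, n = m + 1 := ⟨n - 1, by have := q.2; omega⟩
  set μ := uniformCube (e+1) with hμ
  set B := cyl S (Set.Icc 0 b) with hB
  set Q := cyl Tg (Set.Icc 0 b) with hQ
  have hBm : MeasurableSet B := cyl_meas hS measurableSet_Icc
  have hQm : MeasurableSet Q := cyl_meas hT measurableSet_Icc
  set E' : Set ((Fin (e+1) → ℝ) × (Fin m → (Fin (e+1) → ℝ))) :=
    {p | p.1 ∈ Q ∧ ∀ i, q.succAbove i ∈ G →
      ¬ (p.2 i ∈ B ∧ p.1 (Fin.last e) ≤ p.2 i (Fin.last e))} with hE'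
  have hE'm : MeasurableSet E' := by
    have : {p : (Fin (e+1) → ℝ) × (Fin m → (Fin (e+1) → ℝ)) | ∀ i, q.succAbove i ∈ G →
        ¬ (p.2 i ∈ B ∧ p.1 (Fin.last e) ≤ p.2 i (Fin.last e))} =
        ⋂ i, ⋂ (_ : q.succAbove i ∈ G), {p : (Fin (e+1) → ℝ) × (Fin m → (Fin (e+1) → ℝ)) |
          p.2 i ∈ B ∧ p.1 (Fin.last e) ≤ p.2 i (Fin.last e)}ᶜ := by
      ext p
      rw [Set.mem_iInter]
      refine forall_congr' fun i => ?_
      rw [Set.mem_iInter]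
      exact Iff.rfl
    refine (measurable_fst hQm).inter (s₂ := {p : (Fin (e+1) → ℝ) × (Fin m → (Fin (e+1) → ℝ)) |
        ∀ i, q.succAbove i ∈ G →
        ¬ (p.2 i ∈ B ∧ p.1 (Fin.last e) ≤ p.2 i (Fin.last e))}) ?_
    rw [this]
    refine MeasurableSet.iInter fun i => MeasurableSet.iInter fun _ => ?_
    refine MeasurableSet.compl ?_
    refine MeasurableSet.inter (s₁ := {p : (Fin (e+1) → ℝ) × (Fin m → (Fin (e+1) → ℝ)) | p.2 i ∈ B}) ?_ ?_
    · exact (measurable_pi_apply i).comp measurable_snd hBm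
    · exact measurableSet_le
        (f := fun p : (Fin (e+1) → ℝ) × (Fin m → (Fin (e+1) → ℝ)) => p.1 (Fin.last e))
        (g := fun p => p.2 i (Fin.last e)) (by fun_prop) (by fun_prop)
  have mp := measurePreserving_piFinSuccAbove (fun _ : Fin (m+1) => μ) q
  have hpre : {ω : Fin (m+1) → Fin (e+1) → ℝ | ω q ∈ Q ∧ ∀ i ∈ G, i ≠ q →
        ¬ (ω i ∈ B ∧ ω q (Fin.last e) ≤ ω i (Fin.last e))} =
      (MeasurableEquiv.piFinSuccAbove (fun _ : Fin (m+1) => (Fin (e+1) → ℝ)) q) ⁻¹' E' := by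
    ext ω
    simp only [Set.mem_ofPred_eq, Set.mem_preimage, hE', MeasurableEquiv.piFinSuccAbove_apply]
    refine and_congr Iff.rfl ⟨fun h i hi => h _ hi (Fin.succAbove_ne q i), fun h i hi hiq => ?_⟩
    obtain ⟨i', rfl⟩ := Fin.exists_succAbove_eq hiq
    exact h i' hi
  rw [hpre, mp.measure_preimage_equiv, Measure.prod_apply hE'm]
  set β := ∏ j, s j with hβ
  have hβ0 : 0 < β := Finset.prod_pos fun j _ => hs0 j
  have hs1 : ∀ j, s j ≤ 1 := by
    intro j
    have := measure_mono (μ := volume) (hS1 j)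
    rw [hs j, Real.volume_Icc] at this
    simpa using this
  have hβ1 : β ≤ 1 := Finset.prod_le_one (fun j _ => (hs0 j).le) fun j _ => hs1 j
  have hvol : ∏ j, volume (S j) = ENNReal.ofReal β := by
    rw [hβ, ENNReal.ofReal_prod_of_nonneg fun j _ => (hs0 j).le]
    exact Finset.prod_congr rfl fun j _ => hs j
  have hvolT : ∏ j, volume (Tg j) = ENNReal.ofReal (2 ^ e * β) := by
    have : (2:ℝ) ^ e * β = ∏ j, (2 * s j) := by
      rw [Finset.prod_mul_distrib]; simp [hβ]
    rw [this, ENNReal.ofReal_prod_of_nonneg fun j _ => by have := hs0 j; positivity]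
    exact Finset.prod_congr rfl fun j _ => ht j
  set K := Finset.univ.filter fun i : Fin m => q.succAbove i ∈ G with hK
  have hKc : G.card ≤ K.card + 1 := by
    have : G.erase q ⊆ K.image q.succAbove := by
      intro i hi
      rw [Finset.mem_erase] at hi
      obtain ⟨i', rfl⟩ := Fin.exists_succAbove_eq hi.1
      exact Finset.mem_image_of_mem _ (by simp [hK, hi.2])
    have h1 := (Finset.card_le_card this).trans Finset.card_image_le
    have h2 := Finset.pred_card_le_card_erase (s := G) (a := q)
    omega
  have hsec : ∀ x, (Measure.pi fun j => (fun _ : Fin (m+1) => μ) (q.succAbove j)) (Prod.mk x ⁻¹' E') ≤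
      Q.indicator (fun x => ENNReal.ofReal (1 - β * (b - x (Fin.last e))) ^ K.card) x := by
    intro x
    by_cases hx : x ∈ Q
    · rw [Set.indicator_of_mem hx]
      have hx' : x (Fin.last e) ∈ Set.Icc 0 b := hx.2
      set D := cyl S (Set.Icc (x (Fin.last e)) b) with hD
      have hDm : MeasurableSet D := cyl_meas hS measurableSet_Icc
      have hsub : Prod.mk x ⁻¹' E' ⊆ Set.univ.pi fun i => if q.succAbove i ∈ G then Dᶜ else Set.univ := by
        intro y hy i _
        by_cases hi : q.succAbove i ∈ G
        · simp only [hi, if_true]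
          intro hyD
          exact hy.2 i hi ⟨⟨hyD.1, hx'.1.trans hyD.2.1, hyD.2.2⟩, hyD.2.1⟩
        · simp [hi]
      refine (measure_mono hsub).trans ?_
      rw [Measure.pi_pi]
      have hDμ : μ Dᶜ = ENNReal.ofReal (1 - β * (b - x (Fin.last e))) := by
        have h1 : μ D = ENNReal.ofReal (β * (b - x (Fin.last e))) := by
          rw [hD, hμ, uc_cyl hS measurableSet_Icc hS1 (Set.Icc_subset_Icc hx'.1 hb1), hvol,
            Real.volume_Icc, ENNReal.ofReal_mul hβ0.le]
        rw [prob_compl_eq_one_sub hDm, h1, ENNReal.ofReal_sub _ (mul_nonneg hβ0.le (sub_nonneg.2 hx'.2))]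
        simp
      have : ∀ i : Fin m, μ (if q.succAbove i ∈ G then Dᶜ else Set.univ) =
          if q.succAbove i ∈ G then μ Dᶜ else 1 := by
        intro i; split_ifs <;> simp
      simp only [this]
      rw [Finset.prod_ite, Finset.prod_const, Finset.prod_const_one, mul_one, hDμ]
    · rw [Set.indicator_of_notMem hx]
      have : Prod.mk x ⁻¹' E' = ∅ := by
        ext y
        simp only [hE', Set.mem_preimage, Set.mem_ofPred_eq, Set.mem_empty_iff_false, iff_false]
        exact fun h => hx h.1
      rw [this]; simp
  refine (lintegral_mono hsec).trans ?_
  refine (lint_cyl hT measurableSet_Icc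
    (fun u => ENNReal.ofReal (1 - β * (b - u)) ^ K.card) (by fun_prop)).trans ?_
  rw [hvolT]
  refine (mul_le_mul_right (one_dim hβ0 hβ1 hb hb1 K.card) _).trans ?_
  rw [← ENNReal.ofReal_mul (by positivity)]
  apply ENNReal.ofReal_le_ofReal
  have hGp : (0:ℝ) < G.card := by exact_mod_cast hG.card_pos
  have hKc' : (G.card : ℝ) ≤ K.card + 1 := by exact_mod_cast hKc
  calc 2 ^ e * β * (1 / (β * (K.card + 1))) = 2 ^ e / (K.card + 1) := by field_simp
    _ ≤ 2 ^ e / G.card := by gcongr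

section geom
variable {e : ℕ} (k : ℕ) (a b : Fin (e+1) → ℝ)

/-- scale of the `j`-th coordinate. -/
noncomputable def hh (j : Fin e) : ℝ :=
  if (j:ℕ) < k then (b j.castSucc - a j.castSucc) / 2 else b j.castSucc - a j.castSucc

/-- distance to the relevant side. -/
noncomputable def dlt (σ : Fin e → Bool) (j : Fin e) (x : ℝ) : ℝ :=
  if (j:ℕ) < k ∧ σ j = true then x - a j.castSucc else b j.castSucc - x

/-- dyadic annulus. -/
def tgt (σ : Fin e → Bool) (t : Fin e → ℕ) (j : Fin e) : Set ℝ :=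
  {x | hh k a b j / 2 ^ (t j + 1) < dlt k a b σ j x ∧ dlt k a b σ j x ≤ hh k a b j / 2 ^ t j}

lemma tgt_eq (σ : Fin e → Bool) (t : Fin e → ℕ) (j : Fin e) :
    tgt k a b σ t j = if (j:ℕ) < k ∧ σ j = true then
      Set.Ioc (a j.castSucc + hh k a b j / 2 ^ (t j + 1)) (a j.castSucc + hh k a b j / 2 ^ t j)
      else Set.Ico (b j.castSucc - hh k a b j / 2 ^ t j) (b j.castSucc - hh k a b j / 2 ^ (t j + 1)) := by
  ext x
  simp only [tgt, dlt, Set.mem_ofPred_eq]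
  split_ifs
  · rw [Set.mem_Ioc]; constructor <;> rintro ⟨h1, h2⟩ <;> constructor <;> linarith
  · rw [Set.mem_Ico]; constructor <;> rintro ⟨h1, h2⟩ <;> constructor <;> linarith

lemma tgt_meas (σ : Fin e → Bool) (t : Fin e → ℕ) (j : Fin e) :
    MeasurableSet (tgt k a b σ t j) := by
  rw [tgt_eq]; split_ifs
  · exact measurableSet_Ioc
  · exact measurableSet_Ico

lemma tgt_vol (σ : Fin e → Bool) (t : Fin e → ℕ) (j : Fin e) :
    volume (tgt k a b σ t j) = ENNReal.ofReal (hh k a b j / 2 ^ (t j + 1)) := by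
  rw [tgt_eq]; split_ifs
  · rw [Real.volume_Ioc]; congr 1; rw [pow_succ]; ring
  · rw [Real.volume_Ico]; congr 1; rw [pow_succ]; ring

variable {a b}
lemma hh_nonneg (hab : ∀ j, 0 ≤ a j ∧ a j ≤ b j ∧ b j ≤ 1) (j : Fin e) : 0 ≤ hh k a b j := by
  have := hab j.castSucc
  unfold hh; split_ifs <;> linarith

lemma hh_le (hab : ∀ j, 0 ≤ a j ∧ a j ≤ b j ∧ b j ≤ 1) (j : Fin e) :
    hh k a b j ≤ b j.castSucc - a j.castSucc := by
  have := hab j.castSucc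
  unfold hh; split_ifs <;> linarith

lemma tgt_sub (hab : ∀ j, 0 ≤ a j ∧ a j ≤ b j ∧ b j ≤ 1) (σ : Fin e → Bool) (t : Fin e → ℕ)
    (j : Fin e) : tgt k a b σ t j ⊆ Set.Icc 0 1 := by
  rintro x ⟨h1, h2⟩
  have h := hab j.castSucc
  have h3 := hh_le k hab j
  have h4 := hh_nonneg k hab j
  have h5 : 0 ≤ hh k a b j / 2 ^ (t j + 1) := by positivity
  have h6 : hh k a b j / 2 ^ (t j) ≤ hh k a b j := div_le_self h4 (one_le_pow₀ one_le_two)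
  simp only [dlt] at h1 h2
  split_ifs at h1 h2 <;> constructor <;> linarith

/-- The region of a set generated by `p`. -/
def cell (ℓ : Fin e → ℕ) (σ : Fin e → Bool) (p : Fin (e+1) → ℝ) : Set (Fin (e+1) → ℝ) :=
  {q | q (Fin.last e) ≤ p (Fin.last e) ∧ ∀ j : Fin e,
    if (j:ℕ) < k then
      (if σ j = true then p j.castSucc ≤ q j.castSucc ∧ q j.castSucc ≤ p j.castSucc + (1/2) ^ ℓ j
        else p j.castSucc - (1/2) ^ ℓ j ≤ q j.castSucc ∧ q j.castSucc ≤ p j.castSucc)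
    else q j.castSucc ≤ p j.castSucc}

lemma mem_cell_self (ℓ : Fin e → ℕ) (σ : Fin e → Bool) (p : Fin (e+1) → ℝ) : p ∈ cell k ℓ σ p := by
  refine ⟨le_rfl, fun j => ?_⟩
  have : (0:ℝ) ≤ (1/2) ^ ℓ j := by positivity
  split_ifs <;> first | (constructor <;> linarith) | exact le_rfl

open Classical in
/-- The set generated by `ω i` with orientation `σ`. -/
noncomputable def mem {n : ℕ} (lev : Fin n → Fin e → ℕ) (ω : Fin n → Fin (e+1) → ℝ) (i : Fin n)
    (σ : Fin e → Bool) : Finset (Fin (e+1) → ℝ) :=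
  (Finset.image ω Finset.univ).filter (· ∈ cell k (lev i) σ (ω i))

open Classical in
/-- The family. -/
noncomputable def Fam {n : ℕ} (lev : Fin n → Fin e → ℕ) (ω : Fin n → Fin (e+1) → ℝ) :
    Finset (Finset (Fin (e+1) → ℝ)) :=
  Finset.univ.image (fun i => {ω i}) ∪
    Finset.univ.image (fun p : Fin n × (Fin e → Bool) => mem k lev ω p.1 p.2)

lemma Fam_card {n : ℕ} (lev : Fin n → Fin e → ℕ) (ω : Fin n → Fin (e+1) → ℝ) :
    (Fam k lev ω).card ≤ (1 + 2 ^ e) * n := by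
  classical
  refine (Finset.card_union_le _ _).trans ?_
  have h1 := Finset.card_image_le (s := Finset.univ) (f := fun i => ({ω i} : Finset (Fin (e+1) → ℝ)))
  have h2 := Finset.card_image_le (s := Finset.univ)
    (f := fun p : Fin n × (Fin e → Bool) => mem k lev ω p.1 p.2)
  simp at h1 h2
  linarith

lemma Fam_sub {n : ℕ} (lev : Fin n → Fin e → ℕ) (ω : Fin n → Fin (e+1) → ℝ) :
    ∀ s ∈ Fam k lev ω, s.Nonempty ∧ s ⊆ Finset.image ω Finset.univ := by
  classical
  intro s hs
  rw [Fam, Finset.mem_union, Finset.mem_image, Finset.mem_image] at hs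
  rcases hs with ⟨i, -, rfl⟩ | ⟨⟨i, σ⟩, -, rfl⟩
  · exact ⟨Finset.singleton_nonempty _, by simp⟩
  · refine ⟨⟨ω i, ?_⟩, ?_⟩
    · unfold mem
      rw [Finset.mem_filter]
      exact ⟨by simp, mem_cell_self k _ _ _⟩
    · intro x hx
      exact (Finset.mem_filter.1 hx).1

/-- good indices -/
def Gset {n : ℕ} (lev : Fin n → Fin e → ℕ) (w t : Fin e → ℕ) : Finset (Fin n) :=
  Finset.univ.filter fun i => ∀ j : Fin e, (j:ℕ) < k → w j ≤ lev i j ∧ lev i j ≤ w j + t j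

/-- one-dimensional core: containment and membership. -/
lemma cell_sub (hab : ∀ j, 0 ≤ a j ∧ a j ≤ b j ∧ b j ≤ 1)
    (ha0 : ∀ j : Fin (e+1), k ≤ (j:ℕ) → a j = 0) (hk : k ≤ e) (w t ℓ : Fin e → ℕ)
    (hw : ∀ j : Fin e, (j:ℕ) < k → (1/2:ℝ) ^ w j ≤ 3/2 * hh k a b j)
    (hℓ : ∀ j : Fin e, (j:ℕ) < k → w j ≤ ℓ j) (σ : Fin e → Bool) (p q : Fin (e+1) → ℝ)
    (hp : p ∈ cyl (tgt k a b σ (fun j => t j + 1)) (Set.Icc 0 (b (Fin.last e))))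
    (hq0 : ∀ j, 0 ≤ q j) (hq : q ∈ cell k ℓ σ p) : ∀ j, a j ≤ q j ∧ q j ≤ b j := by
  rw [Fin.forall_fin_succ']
  constructor
  · intro j
    obtain ⟨h1, h2⟩ := hp.1 j
    have h3 := hq.2 j
    have h4 := hh_nonneg k hab j
    have h5 : 0 ≤ hh k a b j / 2 ^ (t j + 1 + 1) := by positivity
    have h6 : hh k a b j / 2 ^ (t j + 1) ≤ hh k a b j / 2 := by
      apply div_le_div_of_nonneg_left h4 two_pos
      exact le_self_pow₀ one_le_two (by omega)
    simp only [dlt] at h1 h2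
    by_cases hj : (j:ℕ) < k
    · have h7 : (1/2:ℝ) ^ ℓ j ≤ (1/2) ^ w j :=
        pow_le_pow_of_le_one (by norm_num) (by norm_num) (hℓ j hj)
      have h8 := hw j hj
      have h9 : hh k a b j = (b j.castSucc - a j.castSucc) / 2 := by simp [hh, hj]
      by_cases hs : σ j = true
      · simp only [hj, hs, and_self, if_true] at h1 h2 h3
        constructor <;> linarith
      · have hn : ¬((j:ℕ) < k ∧ σ j = true) := fun h => hs h.2
        rw [if_neg hn] at h1 h2
        rw [if_pos hj, if_neg hs] at h3
        constructor <;> linarith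
    · simp only [hj, false_and, if_false] at h1 h2 h3
      have := ha0 j.castSucc (by simpa using hj)
      rw [this]
      exact ⟨hq0 _, by linarith⟩
  · rw [ha0 (Fin.last e) (by simpa using hk)]
    exact ⟨hq0 _, hq.1.trans hp.2.2⟩

lemma mem_cell (w t ℓ : Fin e → ℕ)
    (hw : ∀ j : Fin e, (j:ℕ) < k → 3/4 * hh k a b j ≤ (1/2:ℝ) ^ w j)
    (hℓ : ∀ j : Fin e, (j:ℕ) < k → ℓ j ≤ w j + t j) (σ : Fin e → Bool) (p q : Fin (e+1) → ℝ)
    (hp : p ∈ cyl (tgt k a b σ (fun j => t j + 1)) (Set.Icc 0 (b (Fin.last e))))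
    (hq : q ∈ cyl (tgt k a b σ t) (Set.Icc 0 (b (Fin.last e))))
    (hpq : q (Fin.last e) ≤ p (Fin.last e)) : q ∈ cell k ℓ σ p := by
  refine ⟨hpq, fun j => ?_⟩
  obtain ⟨h1, h2⟩ := hp.1 j
  obtain ⟨h3, h4⟩ := hq.1 j
  simp only [dlt] at h1 h2 h3 h4
  by_cases hj : (j:ℕ) < k
  · have h7 : (1/2:ℝ) ^ (w j + t j) ≤ (1/2) ^ ℓ j :=
        pow_le_pow_of_le_one (by norm_num) (by norm_num) (hℓ j hj)
    have h8 : 3/4 * (hh k a b j / 2 ^ t j) ≤ (1/2:ℝ) ^ (w j + t j) := by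
      rw [pow_add]
      have := mul_le_mul_of_nonneg_right (hw j hj) (by positivity : (0:ℝ) ≤ (1/2) ^ t j)
      refine le_trans (le_of_eq ?_) this
      rw [one_div, inv_pow]; ring
    have h9 : hh k a b j / 2 ^ (t j + 1 + 1) = hh k a b j / 2 ^ t j / 4 := by
      rw [pow_succ, pow_succ]; ring
    by_cases hs : σ j = true
    · simp only [hj, hs, and_self, if_true] at h1 h2 h3 h4 ⊢
      constructor <;> linarith
    · have hn : ¬((j:ℕ) < k ∧ σ j = true) := fun h => hs h.2
      rw [if_neg hn] at h1 h2 h3 h4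
      rw [if_pos hj, if_neg hs]
      constructor <;> linarith
  · simp only [hj, false_and, if_false] at h1 h2 h3 h4 ⊢
    linarith

end geom

lemma coverNum_le {d : ℕ} {𝒮 F : Finset (Finset (Fin d → ℝ))} {P : Finset (Fin d → ℝ)}
    {r : Set (Fin d → ℝ)} (hF : F ⊆ 𝒮) (h : ∀ x, (∃ s ∈ F, x ∈ s) ↔ x ∈ r ∧ x ∈ P) :
    coverNum 𝒮 P r ≤ (F.card : ENNReal) := by
  refine sInf_le ⟨F.card, rfl, fun i => (F.equivFin.symm i).1, fun i => hF (F.equivFin.symm i).2, ?_⟩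
  ext x
  simp only [Set.mem_iUnion, Finset.mem_coe, Set.mem_inter_iff]
  rw [← h x]
  constructor
  · rintro ⟨i, hi⟩; exact ⟨_, (F.equivFin.symm i).2, hi⟩
  · rintro ⟨s, hs, hx⟩; exact ⟨F.equivFin ⟨s, hs⟩, by simpa using hx⟩

section cover
variable {e n T : ℕ} (k : ℕ) (a b : Fin (e+1) → ℝ) (lev : Fin n → Fin e → ℕ) (w : Fin e → ℕ)

/-- the class index as natural numbers -/
def tn (t : Fin e → Fin T) : Fin e → ℕ := fun j => (t j : ℕ)

/-- bad event for `q` in a class -/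
def Bad (σ : Fin e → Bool) (t : Fin e → ℕ) (q : Fin n) : Set (Fin n → Fin (e+1) → ℝ) :=
  {ω | ω q ∈ cyl (tgt k a b σ t) (Set.Icc 0 (b (Fin.last e))) ∧
    ∀ i ∈ Gset k lev w t, i ≠ q →
      ¬ (ω i ∈ cyl (tgt k a b σ (fun j => t j + 1)) (Set.Icc 0 (b (Fin.last e))) ∧
        ω q (Fin.last e) ≤ ω i (Fin.last e))}

/-- valid classes -/
def Valid (T : ℕ) (t : Fin e → ℕ) : Prop :=
  ∀ j, 0 < hh k a b j ∧ ((j:ℕ) < k → w j + t j ≤ T)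

/-- boundary slab -/
def slab (n : ℕ) (j : Fin e) : Set ℝ :=
  Set.Icc (a j.castSucc) (a j.castSucc + 1 / n) ∪ Set.Icc (b j.castSucc - 1 / n) (b j.castSucc)

/-- boundary event -/
def Slab (q : Fin n) : Set (Fin n → Fin (e+1) → ℝ) :=
  {ω | ∃ j : Fin e, ω q j.castSucc ∈ slab a b n j}

variable {a b}

/-- dyadic location of one coordinate -/
lemma locate {h δ : ℝ} {n T : ℕ} (hn : 0 < n) (hT : n < 2 ^ T) (hh1 : h ≤ 1)
    (hδ : 1 / (n:ℝ) < δ) (hδh : δ ≤ h) :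
    ∃ t : ℕ, t < T ∧ h / 2 ^ (t+1) < δ ∧ δ ≤ h / 2 ^ t := by
  have hn' : (0:ℝ) < n := by exact_mod_cast hn
  have hδ0 : 0 < δ := lt_trans (by positivity) hδ
  have hh0 : 0 < h := hδ0.trans_le hδh
  obtain ⟨t, h1, h2⟩ := exists_nat_pow_near_of_lt_one (x := δ / h) (y := (1/2:ℝ)) (by positivity)
    ((div_le_one hh0).2 hδh) (by norm_num) (by norm_num)
  rw [div_le_iff₀ hh0, one_div, inv_pow] at h2
  rw [lt_div_iff₀ hh0, one_div, inv_pow] at h1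
  refine ⟨t, ?_, by rw [div_eq_inv_mul]; exact h1, by rw [div_eq_inv_mul]; exact h2⟩
  have h3 : (1:ℝ) / n < (2 ^ t)⁻¹ := by
    refine hδ.trans_le (h2.trans ?_)
    exact mul_le_of_le_one_right (by positivity) hh1
  rw [one_div, inv_lt_inv₀ hn' (by positivity)] at h3
  have h4 : 2 ^ t < n := by exact_mod_cast h3
  exact (Nat.pow_lt_pow_iff_right (by norm_num : 1 < 2)).1 (h4.trans hT)

lemma locate_all (hab : ∀ j, 0 ≤ a j ∧ a j ≤ b j ∧ b j ≤ 1)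
    (hn : 0 < n) (hT : n < 2 ^ T)
    (hw : ∀ j : Fin e, (j:ℕ) < k → 0 < hh k a b j →
      (1/2:ℝ) ^ w j ≤ 3/2 * hh k a b j ∧ 3/4 * hh k a b j ≤ (1/2:ℝ) ^ w j)
    (x : Fin (e+1) → ℝ) (hx : ∀ j, a j ≤ x j ∧ x j ≤ b j) (hx0 : 0 ≤ x (Fin.last e))
    (hs : ∀ j : Fin e, x j.castSucc ∉ slab a b n j) :
    ∃ (σ : Fin e → Bool) (t : Fin e → Fin T), Valid k a b w T (tn t) ∧
      x ∈ cyl (tgt k a b σ (tn t)) (Set.Icc 0 (b (Fin.last e))) := by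
  classical
  have hn' : (0:ℝ) < n := by exact_mod_cast hn
  have key : ∀ j : Fin e, ∃ (s : Bool) (t : Fin T), (0 < hh k a b j ∧ ((j:ℕ) < k → w j + t ≤ T)) ∧
      (hh k a b j / 2 ^ ((t:ℕ)+1) < (if (j:ℕ) < k ∧ s = true then x j.castSucc - a j.castSucc
          else b j.castSucc - x j.castSucc) ∧
        (if (j:ℕ) < k ∧ s = true then x j.castSucc - a j.castSucc
          else b j.castSucc - x j.castSucc) ≤ hh k a b j / 2 ^ (t:ℕ)) := by
    intro j
    have hxj := hx j.castSucc
    have habj := hab j.castSucc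
    have h1 : 1 / (n:ℝ) < x j.castSucc - a j.castSucc := by
      by_contra hc
      exact hs j (Or.inl ⟨hxj.1, by linarith⟩)
    have h2 : 1 / (n:ℝ) < b j.castSucc - x j.castSucc := by
      by_contra hc
      exact hs j (Or.inr ⟨by linarith, hxj.2⟩)
    have hp : 0 < 1 / (n:ℝ) := by positivity
    have hh1 : hh k a b j ≤ 1 := (hh_le k hab j).trans (by linarith)
    have hh0 : 0 < hh k a b j := by
      unfold hh; split_ifs <;> linarith
    obtain ⟨s, hsδ⟩ : ∃ s : Bool, (if (j:ℕ) < k ∧ s = true then x j.castSucc - a j.castSucc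
          else b j.castSucc - x j.castSucc) ≤ hh k a b j := by
      by_cases hj : (j:ℕ) < k
      · by_cases hc : x j.castSucc - a j.castSucc ≤ hh k a b j
        · exact ⟨true, by simpa [hj] using hc⟩
        · refine ⟨false, ?_⟩
          simp only [hj, hh, if_true] at hc ⊢
          simp
          linarith
      · refine ⟨false, ?_⟩
        simp only [hj, hh, if_false, false_and]
        linarith
    have hδ : 1 / (n:ℝ) < (if (j:ℕ) < k ∧ s = true then x j.castSucc - a j.castSucc
          else b j.castSucc - x j.castSucc) := by split_ifs <;> assumption
    obtain ⟨t, htT, ht1, ht2⟩ := locate hn hT hh1 hδ hsδ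
    refine ⟨s, ⟨t, htT⟩, ⟨hh0, fun hj => ?_⟩, ht1, ht2⟩
    have h3 := (hw j hj hh0).2
    have h4 : 3/4 * (1 / (n:ℝ)) < (1/2:ℝ) ^ (w j + t) := by
      have h5 : 3/4 * (hh k a b j / 2 ^ t) ≤ (1/2:ℝ) ^ (w j + t) := by
        rw [pow_add]
        have := mul_le_mul_of_nonneg_right h3 (by positivity : (0:ℝ) ≤ (1/2) ^ t)
        refine le_trans (le_of_eq ?_) this
        rw [one_div, inv_pow]; ring
      linarith
    have h6 : (2:ℝ) ^ (w j + t) < 2 ^ (T+1) := by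
      have h7 : (2:ℝ) ^ (w j + t) * (1/2:ℝ) ^ (w j + t) = 1 := by
        rw [← mul_pow]; norm_num
      have h8 : (n:ℝ) < 2 ^ T := by exact_mod_cast hT
      have h9 := mul_lt_mul_of_pos_left h4 (by positivity : (0:ℝ) < 2 ^ (w j + t))
      rw [h7] at h9
      have h10 : (2:ℝ) ^ (w j + t) * (3/4) < n := by
        have := mul_lt_mul_of_pos_right h9 hn'
        field_simp at this
        linarith
      rw [pow_succ]
      have : (0:ℝ) < 2 ^ (w j + t) := by positivity
      linarith
    have := (pow_lt_pow_iff_right₀ (by norm_num : (1:ℝ) < 2)).1 h6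
    simp only
    omega
  choose σ t h1 h2 using key
  exact ⟨σ, t, h1, h2, hx0, (hx _).2⟩

open Classical in
theorem cover (hab : ∀ j, 0 ≤ a j ∧ a j ≤ b j ∧ b j ≤ 1)
    (ha0 : ∀ j : Fin (e+1), k ≤ (j:ℕ) → a j = 0) (hk : k ≤ e)
    (hn : 0 < n) (hT : n < 2 ^ T)
    (hw : ∀ j : Fin e, (j:ℕ) < k → 0 < hh k a b j →
      (1/2:ℝ) ^ w j ≤ 3/2 * hh k a b j ∧ 3/4 * hh k a b j ≤ (1/2:ℝ) ^ w j)
    (ω : Fin n → Fin (e+1) → ℝ) (hω : ∀ i j, 0 ≤ ω i j) (r : Set (Fin (e+1) → ℝ))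
    (hr : ∀ i, ω i ∈ r ↔ ∀ j, a j ≤ ω i j ∧ ω i j ≤ b j) :
    coverNum (Fam k lev ω) (Finset.image ω Finset.univ) r ≤
      (2 ^ e * T ^ e : ℕ) + (∑ q, (∑ c : (Fin e → Bool) × (Fin e → Fin T),
        (if Valid k a b w T (tn c.2) then (Bad k a b lev w c.1 (tn c.2) q).indicator 1 ω else 0)
        + (Slab a b q).indicator 1 ω) : ENNReal) := by
  set U : Finset (Fin n) := Finset.univ.filter fun q => ω q ∈ r ∧ (ω ∈ Slab a b q ∨
    ∃ c : (Fin e → Bool) × (Fin e → Fin T), Valid k a b w T (tn c.2) ∧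
      ω ∈ Bad k a b lev w c.1 (tn c.2) q) with hU
  have hUc : (U.card : ENNReal) ≤ ∑ q, (∑ c : (Fin e → Bool) × (Fin e → Fin T),
        (if Valid k a b w T (tn c.2) then (Bad k a b lev w c.1 (tn c.2) q).indicator 1 ω else 0)
        + (Slab a b q).indicator 1 ω) := by
    rw [hU, Finset.card_filter]
    push_cast
    refine Finset.sum_le_sum fun q _ => ?_
    split_ifs with h
    · rcases h.2 with h1 | ⟨c, hv, hc⟩
      · rw [Set.indicator_of_mem h1]
        exact le_add_self
      · refine le_trans ?_ le_self_add
        refine le_trans ?_ (Finset.single_le_sum (fun _ _ => zero_le) (Finset.mem_univ c))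
        rw [if_pos hv, Set.indicator_of_mem hc]; rfl
    · exact zero_le
  have hf : ∀ c : (Fin e → Bool) × (Fin e → Fin T), ∃ f : Finset (Finset (Fin (e+1) → ℝ)),
      f.card ≤ 1 ∧ f ⊆ Fam k lev ω ∧ (∀ s ∈ f, ∀ x ∈ s, x ∈ r) ∧
      (Valid k a b w T (tn c.2) → ∀ q,
        ω q ∈ cyl (tgt k a b c.1 (tn c.2)) (Set.Icc 0 (b (Fin.last e))) →
        ω ∉ Bad k a b lev w c.1 (tn c.2) q → ∃ s ∈ f, ω q ∈ s) := by
    intro c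
    by_cases hv : Valid k a b w T (tn c.2)
    swap
    · exact ⟨∅, by simp, by simp, by simp, fun h => absurd h hv⟩
    set H := (Gset k lev w (tn c.2)).filter fun i =>
      ω i ∈ cyl (tgt k a b c.1 (fun j => tn c.2 j + 1)) (Set.Icc 0 (b (Fin.last e))) with hH
    by_cases hne : H.Nonempty
    · obtain ⟨i, hi, hmax⟩ := H.exists_max_image (fun i => ω i (Fin.last e)) hne
      rw [hH, Finset.mem_filter] at hi
      have hiG : ∀ j : Fin e, (j:ℕ) < k → w j ≤ lev i j ∧ lev i j ≤ w j + tn c.2 j :=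
        (Finset.mem_filter.1 hi.1).2
      refine ⟨{mem k lev ω i c.1}, by simp, ?_, ?_, ?_⟩
      · rw [Finset.singleton_subset_iff, Fam, Finset.mem_union]
        exact Or.inr (Finset.mem_image_of_mem (fun p : Fin n × (Fin e → Bool) => mem k lev ω p.1 p.2)
          (Finset.mem_univ (i, c.1)))
      · intro s hs x hx
        rw [Finset.mem_singleton] at hs
        subst hs
        obtain ⟨hx1, hx2⟩ := Finset.mem_filter.1 hx
        obtain ⟨i', -, rfl⟩ := Finset.mem_image.1 hx1
        exact (hr i').2 (cell_sub k hab ha0 hk w (tn c.2) (lev i)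
          (fun j hj => (hw j hj (hv j).1).1) (fun j hj => (hiG j hj).1) c.1 (ω i) (ω i') hi.2 (hω i') hx2)
      · intro _ q hq hbad
        refine ⟨_, Finset.mem_singleton_self _, Finset.mem_filter.2 ⟨by simp, ?_⟩⟩
        have : ∃ i' ∈ Gset k lev w (tn c.2), i' ≠ q ∧
            (ω i' ∈ cyl (tgt k a b c.1 (fun j => tn c.2 j + 1)) (Set.Icc 0 (b (Fin.last e))) ∧
            ω q (Fin.last e) ≤ ω i' (Fin.last e)) := by
          by_contra hcon
          push Not at hcon
          exact hbad ⟨hq, fun i' hi' hne' h => absurd h.2 (not_le.2 (hcon i' hi' hne' h.1))⟩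
        obtain ⟨i', hi', -, h1, h2⟩ := this
        refine mem_cell k w (tn c.2) (lev i) (fun j hj => (hw j hj (hv j).1).2)
          (fun j hj => (hiG j hj).2) c.1 (ω i) (ω q) hi.2 hq ?_
        exact h2.trans (hmax i' (Finset.mem_filter.2 ⟨hi', h1⟩))
    · refine ⟨∅, by simp, by simp, by simp, fun _ q hq hbad => ?_⟩
      exact absurd ⟨hq, fun i hi _ h => hne ⟨i, Finset.mem_filter.2 ⟨hi, h.1⟩⟩⟩ hbad
  choose f hf1 hf2 hf3 hf4 using hf
  set F := Finset.univ.biUnion f ∪ U.image (fun q => ({ω q} : Finset (Fin (e+1) → ℝ))) with hF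
  have hFs : F ⊆ Fam k lev ω := by
    refine Finset.union_subset (Finset.biUnion_subset.2 fun c _ => hf2 c) ?_
    intro s hs
    obtain ⟨q, -, rfl⟩ := Finset.mem_image.1 hs
    rw [Fam, Finset.mem_union]
    exact Or.inl (Finset.mem_image_of_mem (fun i => ({ω i} : Finset (Fin (e+1) → ℝ))) (Finset.mem_univ q))
  have hFc : F.card ≤ 2 ^ e * T ^ e + U.card := by
    refine (Finset.card_union_le _ _).trans (add_le_add ?_ Finset.card_image_le)
    refine Finset.card_biUnion_le.trans ((Finset.sum_le_sum fun c _ => hf1 c).trans ?_)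
    simp
  have hcov : ∀ x, (∃ s ∈ F, x ∈ s) ↔ x ∈ r ∧ x ∈ Finset.image ω Finset.univ := by
    intro x
    constructor
    · rintro ⟨s, hs, hx⟩
      refine ⟨?_, (Fam_sub k lev ω s (hFs hs)).2 hx⟩
      rcases Finset.mem_union.1 hs with h | h
      · obtain ⟨c, -, hc⟩ := Finset.mem_biUnion.1 h
        exact hf3 c s hc x hx
      · obtain ⟨q, hq, rfl⟩ := Finset.mem_image.1 h
        rw [Finset.mem_singleton.1 hx]
        exact (Finset.mem_filter.1 hq).2.1
    · rintro ⟨hxr, hx⟩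
      obtain ⟨q, -, rfl⟩ := Finset.mem_image.1 hx
      by_cases hq : q ∈ U
      · exact ⟨{ω q}, Finset.mem_union_right _ (Finset.mem_image_of_mem _ hq), by simp⟩
      · have hq' : ¬ (ω ∈ Slab a b q ∨ ∃ c : (Fin e → Bool) × (Fin e → Fin T),
            Valid k a b w T (tn c.2) ∧ ω ∈ Bad k a b lev w c.1 (tn c.2) q) :=
          fun h => hq (Finset.mem_filter.2 ⟨Finset.mem_univ _, hxr, h⟩)
        obtain ⟨σ, t, hv, hQ⟩ := locate_all (T := T) k w hab hn hT hw (ω q) ((hr q).1 hxr) (hω q _)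
          (fun j hj => hq' (Or.inl ⟨j, hj⟩))
        obtain ⟨s, hs, hqs⟩ := hf4 (σ, t) hv q hQ (fun h => hq' (Or.inr ⟨(σ, t), hv, h⟩))
        exact ⟨s, Finset.mem_union_left _ (Finset.mem_biUnion.2 ⟨_, Finset.mem_univ _, hs⟩), hqs⟩
  refine (coverNum_le hFs hcov).trans ?_
  refine le_trans (b := (((2 ^ e * T ^ e : ℕ) : ENNReal) + U.card)) (by exact_mod_cast hFc) ?_
  gcongr

end cover

section expect

/-- index-based level assignment -/
def lv (e T n : ℕ) (i : Fin n) : Fin e → Fin (T+1) :=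
  finFunctionFinEquiv.symm ⟨(i:ℕ) % (T+1) ^ e, Nat.mod_lt _ (by positivity)⟩

lemma lv_fiber (e T n : ℕ) (f : Fin e → Fin (T+1)) :
    n / (T+1) ^ e ≤ (Finset.univ.filter fun i : Fin n => lv e T n i = f).card := by
  set D := (T+1) ^ e with hD
  have hDp : 0 < D := by positivity
  set c := finFunctionFinEquiv f with hc
  have hlt : ∀ x : Fin (n / D), (x:ℕ) * D + c < n := by
    intro x
    have h1 : ((x:ℕ) + 1) * D ≤ n / D * D := Nat.mul_le_mul_right _ x.2
    have h2 := Nat.div_mul_le_self n D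
    have h3 : (c:ℕ) < D := c.2
    rw [add_mul, one_mul] at h1
    omega
  have := Finset.card_le_card_of_injOn (s := (Finset.univ : Finset (Fin (n / D))))
    (t := Finset.univ.filter fun i : Fin n => lv e T n i = f)
    (fun x => ⟨(x:ℕ) * D + c, hlt x⟩) ?_ ?_
  · simpa using this
  · intro x _
    rw [Finset.mem_coe, Finset.mem_filter]
    refine ⟨Finset.mem_univ _, ?_⟩
    unfold lv
    rw [Equiv.symm_apply_eq, ← hc]
    apply Fin.ext
    change ((x:ℕ) * D + c) % D = c
    rw [Nat.mul_comm, Nat.mul_add_mod]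
    exact Nat.mod_eq_of_lt c.2
  · intro x _ y _ h
    simp only [Fin.mk.injEq] at h
    have : (x:ℕ) * D = y * D := by omega
    exact Fin.ext (Nat.eq_of_mul_eq_mul_right hDp this)

lemma count_G {e n T k : ℕ} (w t : Fin e → ℕ) (hn : (T+1) ^ e ≤ n)
    (hv : ∀ j : Fin e, (j:ℕ) < k → w j + t j ≤ T) :
    (Gset k (fun i j => (lv e T n i j : ℕ)) w t).Nonempty ∧
    (n:ℝ) / (Gset k (fun i j => (lv e T n i j : ℕ)) w t).card ≤
      2 * ∏ j : Fin e, (if (j:ℕ) < k then ((T:ℝ)+1) / (t j + 1) else 1) := by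
  classical
  set G := Gset k (fun i j => (lv e T n i j : ℕ)) w t with hG
  set A : Fin e → Finset (Fin (T+1)) := fun j => Finset.univ.filter fun v =>
    (j:ℕ) < k → w j ≤ v ∧ (v:ℕ) ≤ w j + t j with hA
  have hAc : ∀ j : Fin e, (if (j:ℕ) < k then t j + 1 else T + 1) ≤ (A j).card := by
    intro j
    split_ifs with hj
    · have := Finset.card_le_card_of_injOn (s := (Finset.univ : Finset (Fin (t j + 1))))
        (t := A j) (fun x => ⟨w j + x, by have := hv j hj; have := x.2; omega⟩) ?_ ?_
      · simpa using this
      · intro x _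
        rw [Finset.mem_coe, hA, Finset.mem_filter]
        have := x.2
        refine ⟨Finset.mem_univ _, fun _ => ?_⟩
        simp only []
        omega
      · intro x _ y _ h
        simp only [Fin.mk.injEq] at h
        exact Fin.ext (by omega)
    · have : A j = Finset.univ := by simp [hA, hj]
      rw [this]; simp
  set D := (T+1) ^ e with hD
  have hDp : 0 < D := by positivity
  have hGc : (∏ j, (A j).card) * (n / D) ≤ G.card := by
    have hmap : Set.MapsTo (lv e T n) (G : Set (Fin n)) (Fintype.piFinset A : Finset (Fin e → Fin (T+1))) := by
      intro i hi
      rw [Finset.mem_coe, hG, Gset, Finset.mem_filter] at hi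
      rw [Finset.mem_coe, Fintype.mem_piFinset]
      intro j
      simp only [hA, Finset.mem_filter, Finset.mem_univ, true_and]
      exact hi.2 j
    rw [Finset.card_eq_sum_card_fiberwise hmap, ← Fintype.card_piFinset, ← smul_eq_mul,
      ← Finset.sum_const]
    refine Finset.sum_le_sum fun f hf => (lv_fiber e T n f).trans (Finset.card_le_card ?_)
    intro i hi
    rw [Finset.mem_filter] at hi ⊢
    refine ⟨?_, hi.2⟩
    rw [hG, Gset, Finset.mem_filter]
    refine ⟨Finset.mem_univ _, fun j => ?_⟩
    have := Fintype.mem_piFinset.1 hf j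
    simp only [hA, Finset.mem_filter, Finset.mem_univ, true_and] at this
    rw [hi.2]
    exact this
  have hprod : ∏ j : Fin e, (if (j:ℕ) < k then t j + 1 else T + 1) ≤ ∏ j, (A j).card :=
    Finset.prod_le_prod' fun j _ => hAc j
  set pr0 : ℕ := ∏ j : Fin e, (if (j:ℕ) < k then t j + 1 else T + 1) with hpr
  have hpr1 : 0 < pr0 := Finset.prod_pos fun j _ => by split_ifs <;> omega
  have hnD : 1 ≤ n / D := (Nat.one_le_div_iff hDp).2 hn
  have h1 : pr0 * (n / D) ≤ G.card := (Nat.mul_le_mul_right _ hprod).trans hGc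
  have hGpos : 0 < G.card := lt_of_lt_of_le (by positivity) h1
  refine ⟨Finset.card_pos.1 hGpos, ?_⟩
  have h2 : n ≤ 2 * (D * (n / D)) := by
    have := Nat.div_add_mod n D
    have := Nat.mod_lt n hDp
    have : D ≤ D * (n/D) := Nat.le_mul_of_pos_right _ hnD
    omega
  have h3 : n * pr0 ≤ 2 * D * G.card := by
    calc n * pr0 ≤ 2 * (D * (n / D)) * pr0 := Nat.mul_le_mul_right _ h2
      _ = 2 * D * (pr0 * (n / D)) := by ring
      _ ≤ _ := Nat.mul_le_mul_left _ h1
  have h4 : ∏ j : Fin e, (if (j:ℕ) < k then ((T:ℝ)+1) / (t j + 1) else 1) = (D:ℝ) / pr0 := by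
    have : ∀ j : Fin e, (if (j:ℕ) < k then ((T:ℝ)+1) / (t j + 1) else 1) =
        ((T:ℝ)+1) / ((if (j:ℕ) < k then t j + 1 else T + 1 : ℕ) : ℝ) := by
      intro j
      have : (T:ℝ) + 1 ≠ 0 := by positivity
      split_ifs
      · push_cast; rfl
      · push_cast; field_simp
    rw [Finset.prod_congr rfl fun j _ => this j, Finset.prod_div_distrib, hpr, hD]
    simp
  rw [h4]
  have h3' : (n:ℝ) * pr0 ≤ 2 * D * G.card := by exact_mod_cast h3
  have : (0:ℝ) < pr0 := by exact_mod_cast hpr1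
  have : (0:ℝ) < G.card := by exact_mod_cast hGpos
  rw [← mul_div_assoc, div_le_div_iff₀ this (by assumption)]
  linarith

variable {e n T : ℕ} (k : ℕ) {a b : Fin (e+1) → ℝ} (lev : Fin n → Fin e → ℕ) (w : Fin e → ℕ)

lemma Bad_meas (σ : Fin e → Bool) (t : Fin e → ℕ) (q : Fin n) :
    MeasurableSet (Bad k a b lev w σ t q) := by
  have hQ := cyl_meas (tgt_meas k a b σ t) (measurableSet_Icc (a := (0:ℝ)) (b := b (Fin.last e)))
  have hB := cyl_meas (tgt_meas k a b σ (fun j => t j + 1))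
    (measurableSet_Icc (a := (0:ℝ)) (b := b (Fin.last e)))
  have : Bad k a b lev w σ t q = (fun ω : Fin n → Fin (e+1) → ℝ => ω q) ⁻¹'
      (cyl (tgt k a b σ t) (Set.Icc 0 (b (Fin.last e)))) ∩
      ⋂ i, ⋂ (_ : i ∈ Gset k lev w t), ⋂ (_ : i ≠ q),
        ((fun ω : Fin n → Fin (e+1) → ℝ => ω i) ⁻¹'
          (cyl (tgt k a b σ (fun j => t j + 1)) (Set.Icc 0 (b (Fin.last e)))) ∩
          {ω : Fin n → Fin (e+1) → ℝ | ω q (Fin.last e) ≤ ω i (Fin.last e)})ᶜ := by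
    ext ω
    simp only [Set.mem_inter_iff, Set.mem_iInter]
    exact Iff.rfl
  rw [this]
  refine (measurable_pi_apply q hQ).inter ?_
  refine MeasurableSet.iInter fun i => MeasurableSet.iInter fun _ => MeasurableSet.iInter fun _ => ?_
  refine ((measurable_pi_apply i hB).inter ?_).compl
  exact measurableSet_le (f := fun ω : Fin n → Fin (e+1) → ℝ => ω q (Fin.last e))
    (g := fun ω => ω i (Fin.last e)) (by fun_prop) (by fun_prop)

lemma Bad_prob (hab : ∀ j, 0 ≤ a j ∧ a j ≤ b j ∧ b j ≤ 1) (σ : Fin e → Bool) (t : Fin e → ℕ)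
    (hv : Valid k a b w T t) (hG : (Gset k lev w t).Nonempty) (q : Fin n) :
    (Measure.pi fun _ : Fin n => uniformCube (e+1)) (Bad k a b lev w σ t q) ≤
      ENNReal.ofReal (2 ^ e / (Gset k lev w t).card) := by
  refine prob_bad (tgt k a b σ (fun j => t j + 1)) (tgt k a b σ t) (tgt_meas k a b σ _)
    (tgt_meas k a b σ _) (tgt_sub k hab σ _) (fun j => hh k a b j / 2 ^ (t j + 1 + 1)) ?_ ?_ ?_
    (b (Fin.last e)) ((hab _).1.trans (hab _).2.1) (hab _).2.2 _ hG q
  · intro j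
    have := (hv j).1
    positivity
  · intro j; exact tgt_vol k a b σ _ j
  · intro j
    rw [tgt_vol]
    congr 1
    rw [pow_succ _ (t j + 1)]; ring

lemma slab_meas (j : Fin e) : MeasurableSet (slab a b n j) :=
  measurableSet_Icc.union measurableSet_Icc

lemma Slab_eq (q : Fin n) : Slab a b q = ⋃ j : Fin e,
    (fun ω : Fin n → Fin (e+1) → ℝ => ω q) ⁻¹' ((fun x : Fin (e+1) → ℝ => x j.castSucc) ⁻¹' slab a b n j) := by
  ext ω
  rw [Set.mem_iUnion]
  exact Iff.rfl

lemma Slab_meas (q : Fin n) : MeasurableSet (Slab a b q) := by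
  rw [Slab_eq]
  exact MeasurableSet.iUnion fun j => measurable_pi_apply q (measurable_pi_apply _ (slab_meas j))

lemma uc_eq (d : ℕ) : uniformCube d = Measure.pi fun _ : Fin d => volume.restrict (Set.Icc (0:ℝ) 1) := by
  rw [uniformCube, volume_pi, Measure.restrict_pi_pi]

instance : IsProbabilityMeasure ((volume : Measure ℝ).restrict (Set.Icc (0:ℝ) 1)) :=
  ⟨by simp⟩

lemma Slab_prob (q : Fin n) :
    (Measure.pi fun _ : Fin n => uniformCube (e+1)) (Slab a b q) ≤ ENNReal.ofReal (2 * e / n) := by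
  rw [Slab_eq]
  refine (measure_iUnion_fintype_le _ _).trans ?_
  have : ∀ j : Fin e, (Measure.pi fun _ : Fin n => uniformCube (e+1))
      ((fun ω : Fin n → Fin (e+1) → ℝ => ω q) ⁻¹'
        ((fun x : Fin (e+1) → ℝ => x j.castSucc) ⁻¹' slab a b n j)) ≤ ENNReal.ofReal (2 / n) := by
    intro j
    have h1 := (measurePreserving_eval (fun _ : Fin n => uniformCube (e+1)) q).measure_preimage
      (measurable_pi_apply (X := fun _ : Fin (e+1) => ℝ) j.castSucc (slab_meas (a := a) (b := b) (n := n) j)).nullMeasurableSet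
    have h2 := (measurePreserving_eval (fun _ : Fin (e+1) => (volume : Measure ℝ).restrict (Set.Icc (0:ℝ) 1))
      j.castSucc).measure_preimage (slab_meas (a := a) (b := b) (n := n) j).nullMeasurableSet
    refine h1.trans_le ?_
    rw [uc_eq]
    refine h2.trans_le ?_
    refine (Measure.restrict_apply_le _ _).trans ?_
    refine (measure_union_le _ _).trans ?_
    rw [Real.volume_Icc, Real.volume_Icc, ← ENNReal.ofReal_add (by simp) (by simp)]
    apply ENNReal.ofReal_le_ofReal
    apply le_of_eq; ring
  refine (Finset.sum_le_sum fun j _ => this j).trans ?_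
  rw [Finset.sum_const, ← ENNReal.ofReal_nsmul]
  apply ENNReal.ofReal_le_ofReal
  simp
  apply le_of_eq; ring

lemma ae_cube (d : ℕ) : ∀ᵐ ω ∂(Measure.pi fun _ : Fin n => uniformCube d), ∀ i j, 0 ≤ ω i j ∧ ω i j ≤ 1 := by
  rw [ae_all_iff]
  intro i
  have h : ∀ᵐ x ∂(uniformCube d), ∀ j, 0 ≤ x j ∧ x j ≤ 1 := by
    rw [uniformCube]
    filter_upwards [ae_restrict_mem (MeasurableSet.univ_pi fun _ => measurableSet_Icc)] with x hx j
    exact hx j trivial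
  exact (measurePreserving_eval (fun _ : Fin n => uniformCube d) i).quasiMeasurePreserving.ae h

end expect

section final

/-- harmonic-type sum -/
noncomputable def HH (T : ℕ) : ℝ := ∑ t : Fin T, 1 / ((t:ℝ) + 1)

lemma HH_one {T : ℕ} (hT : 0 < T) : 1 ≤ HH T := by
  unfold HH
  have := Finset.single_le_sum (f := fun t : Fin T => 1 / ((t:ℝ) + 1)) (s := Finset.univ)
    (fun i _ => by positivity) (Finset.mem_univ ⟨0, hT⟩)
  simpa using this

lemma prod_sum_bound {e T k : ℕ} (hT : 0 < T) :
    ∑ t : Fin e → Fin T, ∏ j : Fin e, (if (j:ℕ) < k then ((T:ℝ)+1) / ((t j : ℕ) + 1) else 1) ≤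
      ((T:ℝ)+1) ^ e * HH T ^ k := by
  classical
  have h1 : ∑ t : Fin e → Fin T, ∏ j : Fin e, (if (j:ℕ) < k then ((T:ℝ)+1) / ((t j : ℕ) + 1) else 1)
      = ∏ j : Fin e, ∑ s : Fin T, (if (j:ℕ) < k then ((T:ℝ)+1) / ((s : ℕ) + 1) else 1) := by
    rw [Finset.prod_univ_sum, Fintype.piFinset_univ]
  have h2 : ∀ j : Fin e, ∑ s : Fin T, (if (j:ℕ) < k then ((T:ℝ)+1) / ((s : ℕ) + 1) else 1) ≤
      ((T:ℝ)+1) * (if (j:ℕ) < k then HH T else 1) := by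
    intro j
    split_ifs
    · rw [HH, Finset.mul_sum]
      apply le_of_eq
      refine Finset.sum_congr rfl fun s _ => ?_
      ring
    · simp
  rw [h1]
  refine (Finset.prod_le_prod (fun j _ => Finset.sum_nonneg fun s _ => ?_) fun j _ => h2 j).trans ?_
  · split_ifs <;> positivity
  rw [Finset.prod_mul_distrib, Finset.prod_const, Finset.card_univ, Fintype.card_fin]
  refine mul_le_mul_of_nonneg_left ?_ (by positivity)
  rw [Finset.prod_ite, Finset.prod_const, Finset.prod_const_one, mul_one]
  refine pow_le_pow_right₀ (HH_one hT) ?_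
  have := Finset.card_le_card_of_injOn (s := Finset.univ.filter fun j : Fin e => (j:ℕ) < k)
    (t := Finset.range k) (fun j => (j:ℕ)) ?_ ?_
  · simpa using this
  · intro j hj
    rw [Finset.mem_coe, Finset.mem_filter] at hj
    exact Finset.mem_coe.2 (Finset.mem_range.2 hj.2)
  · intro x _ y _ h
    exact Fin.ext h

lemma exists_w {h : ℝ} (h0 : 0 < h) (h1 : h ≤ 1/2) :
    ∃ w : ℕ, (1/2:ℝ) ^ w ≤ 3/2 * h ∧ 3/4 * h ≤ (1/2:ℝ) ^ w := by
  obtain ⟨m, hm1, hm2⟩ := exists_nat_pow_near_of_lt_one (x := 3/2 * h) (y := (1/2:ℝ)) (by linarith)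
    (by linarith) (by norm_num) (by norm_num)
  refine ⟨m+1, hm1.le, ?_⟩
  rw [pow_succ]; linarith

variable {e n T k : ℕ} {a b : Fin (e+1) → ℝ}

theorem expect_box (hab : ∀ j, 0 ≤ a j ∧ a j ≤ b j ∧ b j ≤ 1)
    (ha0 : ∀ j : Fin (e+1), k ≤ (j:ℕ) → a j = 0) (hk : k ≤ e) (hn : 0 < n) (hT : n < 2 ^ T)
    (hD : (T+1) ^ e ≤ n) (r : Set (Fin (e+1) → ℝ))
    (hr : ∀ x : Fin (e+1) → ℝ, (∀ j, 0 ≤ x j ∧ x j ≤ 1) → (x ∈ r ↔ ∀ j, a j ≤ x j ∧ x j ≤ b j)) :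
    ∫⁻ ω, coverNum (Fam k (fun i j => (lv e T n i j : ℕ)) ω) (Finset.image ω Finset.univ) r
      ∂(Measure.pi fun _ : Fin n => uniformCube (e+1)) ≤
    ENNReal.ofReal ((2 ^ e + 2 ^ (2 * e + 1) + 2 * e) * ((T:ℝ)+1) ^ e * HH T ^ k) := by
  classical
  have hTp : 0 < T := by
    rcases Nat.eq_zero_or_pos T with h | h
    · subst h; simp at hT; omega
    · exact h
  have hw : ∃ w : Fin e → ℕ, ∀ j : Fin e, (j:ℕ) < k → 0 < hh k a b j →
      (1/2:ℝ) ^ w j ≤ 3/2 * hh k a b j ∧ 3/4 * hh k a b j ≤ (1/2:ℝ) ^ w j := by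
    have : ∀ j : Fin e, ∃ w : ℕ, (j:ℕ) < k → 0 < hh k a b j →
      (1/2:ℝ) ^ w ≤ 3/2 * hh k a b j ∧ 3/4 * hh k a b j ≤ (1/2:ℝ) ^ w := by
      intro j
      by_cases hc : (j:ℕ) < k ∧ 0 < hh k a b j
      · have h1 : hh k a b j ≤ 1/2 := by
          have := hab j.castSucc
          simp only [hh, hc.1, if_true]; linarith
        obtain ⟨w, hw⟩ := exists_w hc.2 h1
        exact ⟨w, fun _ _ => hw⟩
      · exact ⟨0, fun h1 h2 => absurd ⟨h1, h2⟩ hc⟩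
    choose w hw using this
    exact ⟨w, hw⟩
  obtain ⟨w, hw⟩ := hw
  set lev : Fin n → Fin e → ℕ := fun i j => (lv e T n i j : ℕ) with hlev
  set μ := (Measure.pi fun _ : Fin n => uniformCube (e+1)) with hμ
  have hstep : ∫⁻ ω, coverNum (Fam k lev ω) (Finset.image ω Finset.univ) r ∂μ ≤
      ∫⁻ ω, ((2 ^ e * T ^ e : ℕ) : ENNReal) + ∑ q : Fin n, (∑ c : (Fin e → Bool) × (Fin e → Fin T),
        (if Valid k a b w T (tn c.2) then (Bad k a b lev w c.1 (tn c.2) q).indicator 1 ω else 0)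
        + (Slab a b q).indicator 1 ω) ∂μ := by
    refine lintegral_mono_ae ?_
    filter_upwards [ae_cube (n := n) (e+1)] with ω hω
    have := cover (a := a) (b := b) k lev w hab ha0 hk hn hT hw ω (fun i j => (hω i j).1) r (fun i => hr _ (hω i))
    convert this using 2
  refine hstep.trans ?_
  have hm1 : ∀ (q : Fin n) (c : (Fin e → Bool) × (Fin e → Fin T)), Measurable fun ω =>
      (if Valid k a b w T (tn c.2) then (Bad k a b lev w c.1 (tn c.2) q).indicator
        (1 : (Fin n → Fin (e+1) → ℝ) → ENNReal) ω else 0) := by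
    intro q c
    split_ifs
    · exact measurable_one.indicator (Bad_meas k lev w _ _ _)
    · exact measurable_const
  have hm2 : ∀ q : Fin n, Measurable ((Slab a b q).indicator
      (1 : (Fin n → Fin (e+1) → ℝ) → ENNReal)) := fun q => measurable_one.indicator (Slab_meas q)
  have hm3 : ∀ q ∈ (Finset.univ : Finset (Fin n)), Measurable fun ω =>
      (∑ c : (Fin e → Bool) × (Fin e → Fin T),
        (if Valid k a b w T (tn c.2) then (Bad k a b lev w c.1 (tn c.2) q).indicator
          (1 : (Fin n → Fin (e+1) → ℝ) → ENNReal) ω else 0)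
        + (Slab a b q).indicator (1 : (Fin n → Fin (e+1) → ℝ) → ENNReal) ω) := fun q _ =>
    (Finset.measurable_sum _ fun c _ => hm1 q c).add (hm2 q)
  rw [lintegral_add_left measurable_const, lintegral_const, measure_univ, mul_one,
    lintegral_finsetSum _ hm3]
  have hq : ∀ q : Fin n, ∫⁻ ω, (∑ c : (Fin e → Bool) × (Fin e → Fin T),
        (if Valid k a b w T (tn c.2) then (Bad k a b lev w c.1 (tn c.2) q).indicator 1 ω else 0)
        + (Slab a b q).indicator 1 ω) ∂μ ≤
      ENNReal.ofReal ((2 ^ (2 * e + 1) * (((T:ℝ)+1) ^ e * HH T ^ k) + 2 * e) / n) := by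
    intro q
    rw [lintegral_add_right _ (hm2 q), lintegral_finsetSum _ (fun c _ => hm1 q c),
      lintegral_indicator_one (Slab_meas q)]
    have hc : ∀ c : (Fin e → Bool) × (Fin e → Fin T),
        ∫⁻ ω, (if Valid k a b w T (tn c.2) then (Bad k a b lev w c.1 (tn c.2) q).indicator 1 ω else 0) ∂μ
        ≤ ENNReal.ofReal (2 ^ (e+1) / n *
          ∏ j : Fin e, (if (j:ℕ) < k then ((T:ℝ)+1) / ((c.2 j : ℕ) + 1) else 1)) := by
      intro c
      split_ifs with hv
      · rw [lintegral_indicator_one (Bad_meas k lev w _ _ _)]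
        obtain ⟨hG1, hG2⟩ := count_G (k := k) w (tn c.2) hD (fun j => (hv j).2)
        refine (Bad_prob k lev w hab c.1 (tn c.2) hv hG1 q).trans (ENNReal.ofReal_le_ofReal ?_)
        have hnp : (0:ℝ) < n := by exact_mod_cast hn
        have h1 := mul_le_mul_of_nonneg_left hG2 (by positivity : (0:ℝ) ≤ 2 ^ e / n)
        refine le_trans (le_of_eq ?_) (h1.trans (le_of_eq ?_))
        · field_simp
          rfl
        · rw [pow_succ]; simp only [tn]; ring
      · simp
    refine (add_le_add (Finset.sum_le_sum fun c _ => hc c) (Slab_prob q)).trans ?_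
    rw [← ENNReal.ofReal_sum_of_nonneg, ← ENNReal.ofReal_add]
    · apply ENNReal.ofReal_le_ofReal
      rw [add_div, ← Finset.mul_sum, Fintype.sum_prod_type]
      simp only [Finset.sum_const, Finset.card_univ, nsmul_eq_mul]
      have h1 := prod_sum_bound (e := e) (k := k) hTp
      have h2 : ((Fintype.card (Fin e → Bool) : ℕ) : ℝ) = 2 ^ e := by simp
      rw [h2]
      have h3 := mul_le_mul_of_nonneg_left h1 (by positivity : (0:ℝ) ≤ 2 ^ (e+1) / n * 2 ^ e)
      refine add_le_add (le_trans (le_of_eq ?_) (h3.trans (le_of_eq ?_))) le_rfl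
      · ring
      · rw [show 2 * e + 1 = (e + 1) + e by ring, pow_add _ (e+1)]; ring
    · refine Finset.sum_nonneg fun c _ => mul_nonneg (by positivity) (Finset.prod_nonneg fun j _ => ?_)
      split_ifs <;> positivity
    · positivity
    · intro c _
      refine mul_nonneg (by positivity) (Finset.prod_nonneg fun j _ => ?_)
      split_ifs <;> positivity
  refine (add_le_add le_rfl (Finset.sum_le_sum fun q _ => hq q)).trans ?_
  have hH := HH_one hTp
  rw [Finset.sum_const, Finset.card_univ, Fintype.card_fin, ← ENNReal.ofReal_nsmul,
    ← ENNReal.ofReal_natCast, ← ENNReal.ofReal_add (by positivity) (by positivity)]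
  apply ENNReal.ofReal_le_ofReal
  have hnp : (0:ℝ) < n := by exact_mod_cast hn
  rw [nsmul_eq_mul, mul_div_cancel₀ _ hnp.ne']
  push_cast
  have hK : 1 ≤ HH T ^ k := one_le_pow₀ hH
  have hM : 1 ≤ ((T:ℝ)+1) ^ e := one_le_pow₀ (by linarith [(Nat.cast_nonneg T : (0:ℝ) ≤ T)])
  have hTM : (T:ℝ) ^ e ≤ ((T:ℝ)+1) ^ e := pow_le_pow_left₀ (by positivity) (by linarith) _
  have h1 : (T:ℝ) ^ e ≤ ((T:ℝ)+1) ^ e * HH T ^ k :=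
    hTM.trans (le_mul_of_one_le_right (by positivity) hK)
  have h2 : 1 ≤ ((T:ℝ)+1) ^ e * HH T ^ k := one_le_mul_of_one_le_of_one_le hM hK
  have h3 := mul_le_mul_of_nonneg_left h1 (by positivity : (0:ℝ) ≤ 2 ^ e)
  have h4 := mul_le_mul_of_nonneg_left h2 (by positivity : (0:ℝ) ≤ 2 * e)
  linarith

/-- trivial bound by singletons -/
lemma cover_triv (lev : Fin n → Fin e → ℕ) (ω : Fin n → Fin (e+1) → ℝ) (r : Set (Fin (e+1) → ℝ)) :
    coverNum (Fam k lev ω) (Finset.image ω Finset.univ) r ≤ n := by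
  classical
  refine (coverNum_le (F := (Finset.univ.filter fun i => ω i ∈ r).image
    fun i => ({ω i} : Finset (Fin (e+1) → ℝ))) ?_ ?_).trans ?_
  · intro s hs
    rw [Finset.mem_image] at hs
    obtain ⟨i, -, rfl⟩ := hs
    rw [Fam, Finset.mem_union]
    exact Or.inl (Finset.mem_image.2 ⟨i, Finset.mem_univ _, rfl⟩)
  · intro x
    constructor
    · rintro ⟨s, hs, hx⟩
      rw [Finset.mem_image] at hs
      obtain ⟨i, hi, rfl⟩ := hs
      rw [Finset.mem_singleton] at hx
      subst hx
      exact ⟨(Finset.mem_filter.1 hi).2, Finset.mem_image_of_mem _ (Finset.mem_univ _)⟩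
    · rintro ⟨h1, h2⟩
      rw [Finset.mem_image] at h2
      obtain ⟨i, -, rfl⟩ := h2
      exact ⟨{ω i}, Finset.mem_image.2 ⟨i, Finset.mem_filter.2 ⟨Finset.mem_univ _, h1⟩, rfl⟩,
        Finset.mem_singleton_self _⟩
  · have h1 := Finset.card_image_le (s := Finset.univ.filter fun i => ω i ∈ r)
      (f := fun i => ({ω i} : Finset (Fin (e+1) → ℝ)))
    have h2 := Finset.card_filter_le (Finset.univ : Finset (Fin n)) (fun i => ω i ∈ r)
    rw [Finset.card_univ, Fintype.card_fin] at h2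
    exact_mod_cast h1.trans h2

lemma cover_empty (lev : Fin n → Fin e → ℕ) (ω : Fin n → Fin (e+1) → ℝ) (r : Set (Fin (e+1) → ℝ))
    (h : ∀ i, ω i ∉ r) :
    coverNum (Fam k lev ω) (Finset.image ω Finset.univ) r ≤ 0 := by
  classical
  refine (coverNum_le (F := ∅) (Finset.empty_subset _) ?_).trans (by simp)
  intro x
  simp only [Finset.notMem_empty, false_and, exists_false, false_iff]
  rintro ⟨h1, h2⟩
  rw [Finset.mem_image] at h2
  obtain ⟨i, -, rfl⟩ := h2
  exact h i h1

theorem expect_range (hk : k ≤ e) (hn : 0 < n) (hT : n < 2 ^ T)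
    (hD : (T+1) ^ e ≤ n) (r : Set (Fin (e+1) → ℝ)) (hr : DPlusKSided (e+1) k r) :
    ∫⁻ ω, coverNum (Fam k (fun i j => (lv e T n i j : ℕ)) ω) (Finset.image ω Finset.univ) r
      ∂(Measure.pi fun _ : Fin n => uniformCube (e+1)) ≤
    ENNReal.ofReal ((2 ^ e + 2 ^ (2 * e + 1) + 2 * e) * ((T:ℝ)+1) ^ e * HH T ^ k) := by
  classical
  obtain ⟨a, b, rfl⟩ := hr
  set a' : Fin (e+1) → ℝ := fun j => if (j:ℕ) < k then max (a j) 0 else 0 with ha'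
  set b' : Fin (e+1) → ℝ := fun j => min (b j) 1 with hb'
  have hr : ∀ x : Fin (e+1) → ℝ, (∀ j, 0 ≤ x j ∧ x j ≤ 1) →
      (x ∈ (Set.univ.pi fun i : Fin (e+1) => if (i : ℕ) < k then Set.Icc (a i) (b i) else Set.Iic (b i))
        ↔ ∀ j, a' j ≤ x j ∧ x j ≤ b' j) := by
    intro x hx
    rw [Set.mem_univ_pi]
    refine forall_congr' fun j => ?_
    have := hx j
    simp only [ha', hb']
    split_ifs
    · simp only [Set.mem_Icc, max_le_iff, le_min_iff]; tauto
    · simp only [Set.mem_Iic, le_min_iff]; tauto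
  by_cases hne : ∀ j, a' j ≤ b' j
  · refine expect_box (a := a') (b := b') ?_ ?_ hk hn hT hD _ hr
    · intro j
      refine ⟨?_, hne j, min_le_right _ _⟩
      simp only [ha']; split_ifs
      · exact le_max_right _ _
      · exact le_rfl
    · intro j hj
      simp only [ha', not_lt.2 hj, if_false]
  · push Not at hne
    obtain ⟨j, hj⟩ := hne
    refine le_trans ?_ (zero_le (a := ENNReal.ofReal _))
    rw [← lintegral_zero (μ := (Measure.pi fun _ : Fin n => uniformCube (e+1)))]
    refine lintegral_mono_ae ?_
    filter_upwards [ae_cube (n := n) (e+1)] with ω hω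
    refine cover_empty _ _ _ fun i hi => ?_
    have := (hr _ (hω i)).1 hi j
    linarith

lemma HH_le {T : ℕ} : HH T ≤ 1 + Real.log T := by
  have h := harmonic_le_one_add_log T
  refine le_trans (le_of_eq ?_) h
  unfold HH harmonic
  rw [← Fin.sum_univ_eq_sum_range (fun i => ((↑(i+1) : ℚ)⁻¹)) T]
  push_cast
  refine Finset.sum_congr rfl fun i _ => ?_
  rw [one_div]

lemma log_facts {n : ℕ} (hn : 16 ≤ n) :
    4 ≤ Real.logb 2 n ∧ 2 ≤ Real.logb 2 (Real.logb 2 n) ∧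
    ((Nat.log 2 n + 1 : ℕ) : ℝ) + 1 ≤ 2 * Real.logb 2 n ∧
    HH (Nat.log 2 n + 1) ≤ 2 * Real.logb 2 (Real.logb 2 n) := by
  have hn' : (16:ℝ) ≤ n := by exact_mod_cast hn
  have h1 : 4 ≤ Real.logb 2 n := by
    rw [Real.le_logb_iff_rpow_le (by norm_num) (by linarith)]
    norm_num; linarith
  have h2 : 2 ≤ Real.logb 2 (Real.logb 2 n) := by
    rw [Real.le_logb_iff_rpow_le (by norm_num) (by linarith)]
    norm_num; linarith
  have h3 : ((Nat.log 2 n : ℕ) : ℝ) ≤ Real.logb 2 n := by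
    exact_mod_cast Real.natLog_le_logb n 2
  have h4 : ((Nat.log 2 n + 1 : ℕ) : ℝ) + 1 ≤ 2 * Real.logb 2 n := by push_cast; linarith
  refine ⟨h1, h2, h4, HH_le.trans ?_⟩
  have h5 : Real.log ((Nat.log 2 n + 1 : ℕ) : ℝ) ≤ Real.log (2 * Real.logb 2 n) :=
    Real.log_le_log (by positivity) (by linarith)
  rw [Real.log_mul (by norm_num) (by linarith)] at h5
  have h6 : Real.log 2 ≤ 1 := by linarith [Real.log_two_lt_d9]
  have h7 : Real.log (Real.logb 2 n) = Real.logb 2 (Real.logb 2 n) * Real.log 2 := by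
    rw [Real.logb.eq_1 2 (Real.logb 2 n), div_mul_cancel₀]
    exact (Real.log_pos (by norm_num)).ne'
  have h8 : Real.logb 2 (Real.logb 2 n) * Real.log 2 ≤ Real.logb 2 (Real.logb 2 n) :=
    mul_le_of_le_one_right (by linarith) h6
  linarith

lemma exists_N0 (e : ℕ) : ∃ N0 : ℕ, ∀ n : ℕ, 16 ≤ n → N0 ≤ n → (Nat.log 2 n + 1 + 1) ^ e ≤ n := by
  have h := (Real.isLittleO_pow_log_id_atTop (n := e)).bound
    (show 0 < (Real.log 2 / 2) ^ e from pow_pos (half_pos (Real.log_pos (by norm_num))) _)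
  obtain ⟨x0, hx0⟩ := Filter.eventually_atTop.1 h
  refine ⟨⌈x0⌉₊, fun n hn hN => ?_⟩
  have h1 := hx0 n ((Nat.le_ceil x0).trans (by exact_mod_cast hN))
  obtain ⟨h2, h3, h4, h5⟩ := log_facts hn
  have hl2 : 0 < Real.log 2 := Real.log_pos (by norm_num)
  have hln : Real.log n = Real.logb 2 n * Real.log 2 := by
    rw [Real.logb, div_mul_cancel₀ _ hl2.ne']
  have h6 : Real.log n ^ e ≤ (Real.log 2 / 2) ^ e * n := by
    refine (le_abs_self _).trans (h1.trans (le_of_eq ?_))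
    simp
  have h7 : (2 * Real.logb 2 n) ^ e ≤ n := by
    have h8 : Real.log n = (2 * Real.logb 2 n) * (Real.log 2 / 2) := by rw [hln]; ring
    rw [h8, mul_pow, mul_comm] at h6
    exact le_of_mul_le_mul_left h6 (by positivity)
  have h9 : (((Nat.log 2 n + 1 : ℕ) : ℝ) + 1) ^ e ≤ n :=
    (pow_le_pow_left₀ (by positivity) h4 e).trans h7
  exact_mod_cast h9

end final

end RP

/-- Expected-case upper bound for `n` i.i.d. uniform points in `[0,1]^d`: there is a
(measurably chosen) family `𝒮` of at most `C·n` nonempty subsets of the point set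
(almost surely), such that for every fixed `(d+k)`-sided query range the expected minimum
cover number is at most `C·(log₂ n)^{d-1}·(log₂ log₂ n)^k`. -/
theorem random_points_upper_bound_expected :
    ∀ d k : ℕ, 2 ≤ d → 1 ≤ k → k ≤ d - 1 →
      ∃ C : ℝ, ∀ n : ℕ, 16 ≤ n →
        ∃ 𝒮 : (Fin n → (Fin d → ℝ)) → Finset (Finset (Fin d → ℝ)),
          (∀ ω, ∀ s ∈ 𝒮 ω, s.Nonempty ∧ s ⊆ Finset.image ω Finset.univ) ∧
          (∀ᵐ ω ∂(Measure.pi fun _ : Fin n => uniformCube d),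
            ((𝒮 ω).card : ℝ) ≤ C * n) ∧
          ∀ r : Set (Fin d → ℝ), DPlusKSided d k r →
            ∫⁻ ω, coverNum (𝒮 ω) (Finset.image ω Finset.univ) r
                ∂(Measure.pi fun _ : Fin n => uniformCube d) ≤
              ENNReal.ofReal
                (C * (Real.logb 2 n) ^ (d - 1) * (Real.logb 2 (Real.logb 2 n)) ^ k) := by
  intro d k hd hk1 hkd
  obtain ⟨e, rfl⟩ : ∃ e, d = e + 1 := ⟨d - 1, by omega⟩
  rw [Nat.add_sub_cancel] at hkd
  obtain ⟨N0, hN0⟩ := RP.exists_N0 e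
  set K : ℝ := (2 ^ e + 2 ^ (2 * e + 1) + 2 * e) * 2 ^ e * 2 ^ k with hK
  have hK0 : 0 ≤ K := by positivity
  refine ⟨(1 + 2 ^ e) + N0 + K, fun n hn => ?_⟩
  set T := Nat.log 2 n + 1 with hT
  refine ⟨RP.Fam k (fun i j => (RP.lv e T n i j : ℕ)), RP.Fam_sub k _, ?_, ?_⟩
  · refine Filter.Eventually.of_forall fun ω => ?_
    have h : ((RP.Fam k (fun i j => (RP.lv e T n i j : ℕ)) ω).card : ℝ) ≤ (1 + 2 ^ e) * n := by
      exact_mod_cast RP.Fam_card k (fun i j => (RP.lv e T n i j : ℕ)) ω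
    refine h.trans (mul_le_mul_of_nonneg_right ?_ (by positivity))
    have : (0:ℝ) ≤ N0 := by positivity
    linarith
  · intro r hr
    rw [Nat.add_sub_cancel]
    obtain ⟨h1, h2, h3, h4⟩ := RP.log_facts hn
    set l := Real.logb 2 n with hl
    set ll := Real.logb 2 l with hll
    have hN0' : (0:ℝ) ≤ N0 := by positivity
    have hle : 1 ≤ l ^ e := one_le_pow₀ (by linarith)
    have hlk : 1 ≤ ll ^ k := one_le_pow₀ (by linarith)
    have hprod : 1 ≤ l ^ e * ll ^ k := one_le_mul_of_one_le_of_one_le hle hlk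
    by_cases hD : (T + 1) ^ e ≤ n
    · refine (RP.expect_range hkd (by omega) (Nat.lt_pow_succ_log_self (by norm_num) n) hD r hr).trans ?_
      apply ENNReal.ofReal_le_ofReal
      have hT0 : 0 < T := by omega
      have hH := RP.HH_one hT0
      have h5 : ((T:ℝ) + 1) ^ e ≤ 2 ^ e * l ^ e := by
        rw [← mul_pow]; exact pow_le_pow_left₀ (by positivity) h3 e
      have h6 : RP.HH T ^ k ≤ 2 ^ k * ll ^ k := by
        rw [← mul_pow]; exact pow_le_pow_left₀ (by linarith) h4 k
      calc (2 ^ e + 2 ^ (2 * e + 1) + 2 * e) * ((T:ℝ)+1) ^ e * RP.HH T ^ k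
          ≤ (2 ^ e + 2 ^ (2 * e + 1) + 2 * e) * (2 ^ e * l ^ e) * (2 ^ k * ll ^ k) := by
            gcongr
        _ = K * (l ^ e * ll ^ k) := by rw [hK]; ring
        _ ≤ ((1 + 2 ^ e) + N0 + K) * (l ^ e * ll ^ k) := by
            refine mul_le_mul_of_nonneg_right ?_ (by linarith)
            have : (0:ℝ) ≤ 1 + 2 ^ e := by positivity
            linarith
        _ = _ := by ring
    · have hlt : n < N0 := by
        by_contra hc
        exact hD (hN0 n hn (not_lt.1 hc))
      refine (lintegral_mono fun ω => RP.cover_triv _ ω r).trans ?_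
      rw [lintegral_const, measure_univ, mul_one, ← ENNReal.ofReal_natCast]
      apply ENNReal.ofReal_le_ofReal
      have h5 : (n:ℝ) ≤ N0 := by exact_mod_cast hlt.le
      have h6 : (N0:ℝ) ≤ (1 + 2 ^ e) + N0 + K := by
        have : (0:ℝ) ≤ 1 + 2 ^ e := by positivity
        linarith
      rw [mul_assoc]
      exact (h5.trans h6).trans (le_mul_of_one_le_right (by linarith) hprod)
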